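/- arXiv:2301.03517 — 2 statements merged into one kernel-verified Lean document; each statement's English description precedes it below -/
import Mathlib

section
/- For every n ≥ 2 and α ∈ (0,1), the set of values {DQ^ES_α(X) : X a random vector of n integrable real random variables on the given atomless probability space} is exactly the closed interval [0, 1]. -/
open MeasureTheory ProbabilityTheory Filter Set

namespace DQ

variable {Ω : Type*} [MeasurableSpace Ω]

/-- An atomless probability measure: every non-null measurable set has a measurable
subset of strictly smaller positive measure. -/
def Atomless (P : Measure Ω) : Prop :=
  ∀ A : Set Ω, MeasurableSet A → 0 < P A →
    ∃ B, MeasurableSet B ∧ B ⊆ A ∧ 0 < P B ∧ P B < P A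

/-- Value-at-Risk at level `α` (small-`α` convention):
`VaR_α(X) = inf {x | P(X ≤ x) ≥ 1 - α}`. -/
noncomputable def VaR (P : Measure Ω) (α : ℝ) (X : Ω → ℝ) : ℝ :=
  sInf {x : ℝ | 1 - α ≤ (P {ω | X ω ≤ x}).toReal}

/-- Expected Shortfall at level `α`: `ES_α(X) = (1/α) ∫_0^α VaR_β(X) dβ`. -/
noncomputable def ES (P : Measure Ω) (α : ℝ) (X : Ω → ℝ) : ℝ :=
  (1 / α) * ∫ β in Set.Ioo (0 : ℝ) α, VaR P β X

/-- `α* = inf {β ∈ (0,1) | VaR_β(∑ Xᵢ) ≤ ∑ VaR_α(Xᵢ)}`, with `inf ∅ = 1`. -/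
noncomputable def alphaStarVaR (P : Measure Ω) (α : ℝ) {n : ℕ} (X : Fin n → Ω → ℝ) : ℝ :=
  sInf ({β ∈ Set.Ioo (0 : ℝ) 1 |
    VaR P β (fun ω => ∑ i, X i ω) ≤ ∑ i, VaR P α (X i)} ∪ {1})

/-- Diversification quotient based on VaR: `DQ^VaR_α(X) = α*/α`. -/
noncomputable def DQVaR (P : Measure Ω) (α : ℝ) {n : ℕ} (X : Fin n → Ω → ℝ) : ℝ :=
  alphaStarVaR P α X / α

/-- `α* = inf {β ∈ (0,1) | ES_β(∑ Xᵢ) ≤ ∑ ES_α(Xᵢ)}`, with `inf ∅ = 1`. -/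
noncomputable def alphaStarES (P : Measure Ω) (α : ℝ) {n : ℕ} (X : Fin n → Ω → ℝ) : ℝ :=
  sInf ({β ∈ Set.Ioo (0 : ℝ) 1 |
    ES P β (fun ω => ∑ i, X i ω) ≤ ∑ i, ES P α (X i)} ∪ {1})

/-- Diversification quotient based on ES: `DQ^ES_α(X) = α*/α`. -/
noncomputable def DQES (P : Measure Ω) (α : ℝ) {n : ℕ} (X : Fin n → Ω → ℝ) : ℝ :=
  alphaStarES P α X / α

end DQ
namespace DQ
section A
variable {Ω : Type*} [MeasurableSpace Ω]

lemma cdf_eq {P : Measure Ω} [IsProbabilityMeasure P] {X : Ω → ℝ} (hX : Measurable X) (x : ℝ) :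
    (P {ω | X ω ≤ x}).toReal = cdf (P.map X) x := by
  have := Measure.isProbabilityMeasure_map (μ := P) hX.aemeasurable
  rw [cdf_eq_real, Measure.real, Measure.map_apply hX measurableSet_Iic]
  rfl

lemma VaR_le_iff {P : Measure Ω} [IsProbabilityMeasure P] {X : Ω → ℝ} (hX : Measurable X)
    {β : ℝ} (hβ : β ∈ Ioo (0:ℝ) 1) (x : ℝ) :
    VaR P β X ≤ x ↔ 1 - β ≤ cdf (P.map X) x := by
  have := Measure.isProbabilityMeasure_map (μ := P) hX.aemeasurable
  have hS : {x : ℝ | 1 - β ≤ (P {ω | X ω ≤ x}).toReal} = {x | 1 - β ≤ cdf (P.map X) x} := by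
    ext y; simp only [mem_ofPred_eq, cdf_eq hX]
  unfold VaR
  rw [hS]
  have hne : {x | 1 - β ≤ cdf (P.map X) x}.Nonempty := by
    have := (tendsto_cdf_atTop (P.map X)).eventually (lt_mem_nhds (show 1 - β < 1 by linarith [hβ.1]))
    obtain ⟨y, hy⟩ := this.exists
    exact ⟨y, le_of_lt hy⟩
  have hbd : BddBelow {x | 1 - β ≤ cdf (P.map X) x} := by
    have := (tendsto_cdf_atBot (P.map X)).eventually (gt_mem_nhds (show 0 < 1 - β by linarith [hβ.2]))
    obtain ⟨y, hy⟩ := this.exists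
    refine ⟨y, fun z hz => ?_⟩
    by_contra h
    push Not at h
    have := monotone_cdf (P.map X) h.le
    simp only [mem_ofPred_eq] at hz
    linarith
  constructor
  · intro h
    have hc : Tendsto (cdf (P.map X)) (nhdsWithin x (Ioi x)) (nhds (cdf (P.map X) x)) :=
      ((cdf (P.map X)).right_continuous x).tendsto.mono_left (nhdsWithin_mono _ Ioi_subset_Ici_self)
    refine ge_of_tendsto hc ?_
    filter_upwards [self_mem_nhdsWithin] with y hy
    obtain ⟨z, hz, hzy⟩ := exists_lt_of_csInf_lt hne (lt_of_le_of_lt h hy)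
    exact le_trans hz (monotone_cdf _ hzy.le)
  · intro h
    exact csInf_le hbd h

lemma VaR_anti {P : Measure Ω} [IsProbabilityMeasure P] {X : Ω → ℝ} (hX : Measurable X) :
    AntitoneOn (fun β => VaR P β X) (Ioo (0:ℝ) 1) := by
  intro β hβ γ hγ h
  show VaR P γ X ≤ VaR P β X
  rw [VaR_le_iff hX hγ]
  have := (VaR_le_iff (P := P) hX hβ _).1 le_rfl
  linarith

lemma VaR_aem {P : Measure Ω} [IsProbabilityMeasure P] {X : Ω → ℝ} (hX : Measurable X) :
    AEMeasurable (fun β => VaR P β X) (volume.restrict (Ioo (0:ℝ) 1)) :=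
  aemeasurable_restrict_of_antitoneOn measurableSet_Ioo (VaR_anti hX)

lemma VaR_map {P : Measure Ω} [IsProbabilityMeasure P] {X : Ω → ℝ} (hX : Measurable X) :
    (volume.restrict (Ioo (0:ℝ) 1)).map (fun β => VaR P β X) = P.map X := by
  have := Measure.isProbabilityMeasure_map (μ := P) hX.aemeasurable
  refine Measure.ext_of_Iic _ _ fun x => ?_
  rw [Measure.map_apply_of_aemeasurable (VaR_aem hX) measurableSet_Iic,
    Measure.restrict_apply' measurableSet_Ioo, ← ofReal_cdf]
  have h0 := cdf_nonneg (P.map X) x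
  have h1 := cdf_le_one (P.map X) x
  apply le_antisymm
  · refine (measure_mono (t := Icc (1 - cdf (P.map X) x) 1) ?_).trans (by simp)
    rintro β ⟨hb, hβ⟩
    have := (VaR_le_iff hX hβ x).1 hb
    exact ⟨by linarith, hβ.2.le⟩
  · refine le_trans (by simp) (measure_mono (s := Ioo (1 - cdf (P.map X) x) 1) ?_)
    rintro β ⟨hb, hβ⟩
    have hβ' : β ∈ Ioo (0:ℝ) 1 := ⟨by linarith, hβ⟩
    exact ⟨(VaR_le_iff hX hβ' x).2 (by linarith), hβ'⟩

lemma VaR_int {P : Measure Ω} [IsProbabilityMeasure P] {X : Ω → ℝ} (hX : Measurable X)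
    (hi : Integrable X P) : IntegrableOn (fun β => VaR P β X) (Ioo (0:ℝ) 1) := by
  have h : Integrable id (P.map X) := by
    rw [integrable_map_measure (by fun_prop) hX.aemeasurable]; exact hi
  rw [← VaR_map hX, integrable_map_measure (by fun_prop) (VaR_aem hX)] at h
  exact h

lemma pos_integral {P : Measure Ω} [IsProbabilityMeasure P] {X : Ω → ℝ} (hX : Measurable X) (t : ℝ) :
    ∫ ω, max (X ω - t) 0 ∂P = ∫ β in Ioo (0:ℝ) 1, max (VaR P β X - t) 0 := by
  have hg : Measurable (fun y : ℝ => max (y - t) 0) := by fun_prop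
  rw [← integral_map (f := fun y : ℝ => max (y - t) 0) hX.aemeasurable hg.aestronglyMeasurable, ← VaR_map hX,
    integral_map (VaR_aem hX) hg.aestronglyMeasurable]

lemma pos_int {P : Measure Ω} [IsProbabilityMeasure P] {X : Ω → ℝ} (hX : Measurable X)
    (hi : Integrable X P) (t : ℝ) :
    IntegrableOn (fun β => max (VaR P β X - t) 0) (Ioo (0:ℝ) 1) :=
  ((VaR_int hX hi).sub (integrable_const t)).pos_part

lemma ES_le {P : Measure Ω} [IsProbabilityMeasure P] {X : Ω → ℝ} (hX : Measurable X)
    (hi : Integrable X P) {α : ℝ} (hα : α ∈ Ioo (0:ℝ) 1) (t : ℝ) :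
    ∫ β in Ioo (0 : ℝ) α, VaR P β X ≤ α * t + ∫ ω, max (X ω - t) 0 ∂P := by
  have hsub : Ioo (0:ℝ) α ⊆ Ioo 0 1 := Ioo_subset_Ioo_right hα.2.le
  have hm : ∫ β in Ioo (0 : ℝ) α, max (VaR P β X - t) 0 ≤ ∫ β in Ioo (0 : ℝ) 1, max (VaR P β X - t) 0 :=
    setIntegral_mono_set (pos_int hX hi t) (ae_of_all _ fun _ => le_max_right _ _) hsub.eventuallyLE
  have hm2 : ∫ β in Ioo (0 : ℝ) α, (VaR P β X - t) ≤ ∫ β in Ioo (0 : ℝ) α, max (VaR P β X - t) 0 :=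
    integral_mono (((VaR_int hX hi).mono_set hsub).sub (integrable_const t))
      ((pos_int hX hi t).mono_set hsub) fun _ => le_max_left _ _
  rw [integral_sub ((VaR_int hX hi).mono_set hsub) (integrable_const t)] at hm2
  simp [hα.1.le] at hm2
  rw [pos_integral hX]
  linarith

lemma ES_eq {P : Measure Ω} [IsProbabilityMeasure P] {X : Ω → ℝ} (hX : Measurable X)
    (hi : Integrable X P) {α : ℝ} (hα : α ∈ Ioo (0:ℝ) 1) :
    ∫ β in Ioo (0 : ℝ) α, VaR P β X =
      α * VaR P α X + ∫ ω, max (X ω - VaR P α X) 0 ∂P := by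
  have hsub : Ioo (0:ℝ) α ⊆ Ioo 0 1 := Ioo_subset_Ioo_right hα.2.le
  rw [pos_integral hX]
  set t := VaR P α X with ht
  have hm : ∫ β in Ioo (0 : ℝ) 1, max (VaR P β X - t) 0 = ∫ β in Ioo (0 : ℝ) α, max (VaR P β X - t) 0 := by
    refine (setIntegral_eq_of_subset_of_forall_sdiff_eq_zero measurableSet_Ioo hsub ?_)
    rintro β ⟨hβ, hn⟩
    have : α ≤ β := by
      by_contra h
      exact hn ⟨hβ.1, not_le.1 h⟩
    exact max_eq_right (sub_nonpos.2 (VaR_anti hX hα hβ this))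
  have hm2 : ∫ β in Ioo (0 : ℝ) α, max (VaR P β X - t) 0 = ∫ β in Ioo (0 : ℝ) α, (VaR P β X - t) := by
    refine setIntegral_congr_fun measurableSet_Ioo fun β hβ => ?_
    exact max_eq_left (sub_nonneg.2 (VaR_anti hX (hsub hβ) hα hβ.2.le))
  rw [hm, hm2, integral_sub ((VaR_int hX hi).mono_set hsub) (integrable_const t)]
  simp [hα.1.le]

lemma ES_subadd {P : Measure Ω} [IsProbabilityMeasure P] {n : ℕ} {X : Fin n → Ω → ℝ}
    (hX : ∀ i, Measurable (X i))
    (hi : ∀ i, Integrable (X i) P) {α : ℝ} (hα : α ∈ Ioo (0:ℝ) 1) :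
    ES P α (fun ω => ∑ i, X i ω) ≤ ∑ i, ES P α (X i) := by
  unfold ES
  rw [← Finset.mul_sum]
  refine mul_le_mul_of_nonneg_left ?_ (by have := hα.1; positivity)
  refine (ES_le (by fun_prop) (integrable_finsetSum _ fun i _ => hi i) hα (∑ i, VaR P α (X i))).trans ?_
  simp_rw [fun i => ES_eq (hX i) (hi i) hα]
  have hp : ∀ i, Integrable (fun ω => max (X i ω - VaR P α (X i)) 0) P := fun i =>
    ((hi i).sub (integrable_const _)).pos_part
  rw [Finset.sum_add_distrib, ← Finset.mul_sum, ← integral_finsetSum _ fun i _ => hp i]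
  refine add_le_add le_rfl ?_
  refine integral_mono (((integrable_finsetSum _ fun i _ => hi i).sub (integrable_const _)).pos_part)
    (integrable_finsetSum _ fun i _ => hp i) fun ω => ?_
  refine max_le ?_ (Finset.sum_nonneg fun i _ => le_max_right _ _)
  rw [← Finset.sum_sub_distrib]
  exact Finset.sum_le_sum fun i _ => le_max_left _ _


lemma VaR_eq {P : Measure Ω} [IsProbabilityMeasure P] {X : Ω → ℝ} (hX : Measurable X)
    {β : ℝ} (hβ : β ∈ Ioo (0:ℝ) 1) (x : ℝ) (h1 : 1 - β ≤ P.real {ω | X ω ≤ x})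
    (h2 : ∀ y < x, P.real {ω | X ω ≤ y} < 1 - β) : VaR P β X = x := by
  apply le_antisymm
  · rw [VaR_le_iff hX hβ, ← cdf_eq hX]; exact h1
  · by_contra h
    have h3 := (VaR_le_iff (P := P) hX hβ _).1 le_rfl
    rw [← cdf_eq hX] at h3
    exact absurd (h2 _ (not_le.1 h)) (not_lt.2 h3)

lemma VaR_ind {P : Measure Ω} [IsProbabilityMeasure P] {C : Set Ω} (hC : MeasurableSet C)
    {β : ℝ} (hβ : β ∈ Ioo (0:ℝ) 1) :
    VaR P β (C.indicator fun _ => (1:ℝ)) = (Iio (P.real C)).indicator (fun _ => (1:ℝ)) β := by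
  classical
  have hm : Measurable (C.indicator fun _ => (1:ℝ)) := measurable_const.indicator hC
  have hneg : ∀ y < (0:ℝ), {ω | C.indicator (fun _ => (1:ℝ)) ω ≤ y} = ∅ := by
    intro y hy
    ext ω
    simp only [mem_ofPred_eq, mem_empty_iff_false, iff_false, not_le]
    exact lt_of_lt_of_le hy (indicator_nonneg (fun _ _ => zero_le_one) ω)
  have hmid : ∀ y, 0 ≤ y → y < (1:ℝ) → {ω | C.indicator (fun _ => (1:ℝ)) ω ≤ y} = Cᶜ := by
    intro y hy hy1
    ext ω
    by_cases h : ω ∈ C <;> simp [h, hy, hy1]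
  have hC1 : P.real Cᶜ = 1 - P.real C := by
    rw [measureReal_compl hC]; simp
  by_cases h : β < P.real C
  · rw [indicator_of_mem (by exact h)]
    refine VaR_eq hm hβ 1 ?_ ?_
    · have : {ω | C.indicator (fun _ => (1:ℝ)) ω ≤ 1} = univ := by
        ext ω
        by_cases h : ω ∈ C <;> simp [h]
      rw [this]; simp [hβ.1.le]
    · intro y hy
      rcases lt_or_ge y 0 with h0 | h0
      · rw [hneg y h0]; simp [hβ.2]
      · rw [hmid y h0 hy, hC1]; linarith
  · rw [indicator_of_notMem (by exact h)]
    refine VaR_eq hm hβ 0 ?_ ?_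
    · rw [hmid 0 le_rfl one_pos, hC1]; linarith
    · intro y hy
      rw [hneg y hy]; simp [hβ.2]

lemma VaR_neg {P : Measure Ω} [IsProbabilityMeasure P] {B : Set Ω} (hB : MeasurableSet B)
    {β : ℝ} (hβ : β ∈ Ioo (0:ℝ) 1) (hb : P.real B < 1 - β) :
    VaR P β (fun ω => - B.indicator (fun _ => (1:ℝ)) ω) = 0 := by
  have hm : Measurable (fun ω => - B.indicator (fun _ => (1:ℝ)) ω) :=
    (measurable_const.indicator hB).neg
  refine VaR_eq hm hβ 0 ?_ ?_
  · have : {ω | - B.indicator (fun _ => (1:ℝ)) ω ≤ 0} = univ := by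
      ext ω
      by_cases h : ω ∈ B <;> simp [h]
    rw [this]; simp [hβ.1.le]
  · intro y hy
    refine lt_of_le_of_lt (measureReal_mono ?_) hb
    intro ω hω
    by_contra h
    simp [h] at hω
    linarith

lemma ES_ind {P : Measure Ω} [IsProbabilityMeasure P] {C : Set Ω} (hC : MeasurableSet C)
    {β : ℝ} (hβ : β ∈ Ioo (0:ℝ) 1) :
    ES P β (C.indicator fun _ => (1:ℝ)) = min β (P.real C) / β := by
  unfold ES
  have : ∫ γ in Ioo (0:ℝ) β, VaR P γ (C.indicator fun _ => (1:ℝ)) =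
      ∫ γ in Ioo (0:ℝ) β, (Iio (P.real C)).indicator (fun _ => (1:ℝ)) γ :=
    setIntegral_congr_fun measurableSet_Ioo fun γ hγ => VaR_ind hC ⟨hγ.1, hγ.2.trans hβ.2⟩
  rw [this, setIntegral_indicator measurableSet_Iio, Ioo_inter_Iio]
  have h0 : 0 ≤ min β (P.real C) := le_min hβ.1.le measureReal_nonneg
  simp [h0]
  ring

lemma ES_neg {P : Measure Ω} [IsProbabilityMeasure P] {B : Set Ω} (hB : MeasurableSet B)
    {β : ℝ} (hβ : β ∈ Ioo (0:ℝ) 1) (hb : P.real B ≤ 1 - β) :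
    ES P β (fun ω => - B.indicator (fun _ => (1:ℝ)) ω) = 0 := by
  unfold ES
  have : ∫ γ in Ioo (0:ℝ) β, VaR P γ (fun ω => - B.indicator (fun _ => (1:ℝ)) ω) =
      ∫ γ in Ioo (0:ℝ) β, (0:ℝ) :=
    setIntegral_congr_fun measurableSet_Ioo fun γ hγ =>
      VaR_neg hB ⟨hγ.1, hγ.2.trans hβ.2⟩ (by linarith [hγ.2])
  rw [this]; simp

lemma ES_zero {P : Measure Ω} [IsProbabilityMeasure P]
    {β : ℝ} (hβ : β ∈ Ioo (0:ℝ) 1) :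
    ES P β (fun _ => (0:ℝ)) = 0 := by
  have := ES_neg (P := P) (B := ∅) MeasurableSet.empty hβ (by simp [hβ.2.le])
  simpa using this

lemma exists_small {P : Measure Ω} [IsProbabilityMeasure P] (hP : Atomless P) (k : ℕ) {A : Set Ω}
    (hA : MeasurableSet A) (h0 : 0 < P.real A) :
    ∃ B, MeasurableSet B ∧ B ⊆ A ∧ 0 < P.real B ∧ P.real B ≤ P.real A * (1/2)^k := by
  induction k with
  | zero => exact ⟨A, hA, subset_rfl, h0, by simp⟩
  | succ k ih =>
    obtain ⟨B, hB, hBA, hB0, hBk⟩ := ih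
    have hB0' : 0 < P B := by
      rw [Measure.real, ENNReal.toReal_pos_iff] at hB0; exact hB0.1
    obtain ⟨D, hD, hDB, hD0, hDlt⟩ := hP B hB hB0'
    have e0 : 0 < P.real D := ENNReal.toReal_pos hD0.ne' (measure_ne_top _ _)
    have e1 : P.real D < P.real B := (ENNReal.toReal_lt_toReal (measure_ne_top _ _) (measure_ne_top _ _)).2 hDlt
    have e2 : P.real (B \ D) = P.real B - P.real D := measureReal_sdiff hDB hD
    rw [pow_succ]
    rcases le_total (P.real D) (P.real B / 2) with h | h
    · exact ⟨D, hD, hDB.trans hBA, e0, by linarith⟩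
    · exact ⟨B \ D, hB.diff hD, sdiff_subset.trans hBA, by linarith, by linarith⟩

lemma exists_eq {P : Measure Ω} [IsProbabilityMeasure P] (hP : Atomless P) {A : Set Ω}
    (hA : MeasurableSet A) {t : ℝ} (h0 : 0 ≤ t) (ht : t ≤ P.real A) :
    ∃ B, MeasurableSet B ∧ B ⊆ A ∧ P.real B = t := by
  let T := {B : Set Ω // MeasurableSet B ∧ B ⊆ A ∧ P.real B ≤ t}
  have step : ∀ B : T, ∃ B' : T, B.1 ⊆ B'.1 ∧
      ∀ C : T, B.1 ⊆ C.1 → P.real C.1 - P.real B.1 ≤ 2 * (P.real B'.1 - P.real B.1) := by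
    intro B
    let S : Set ℝ := {x | ∃ C : T, B.1 ⊆ C.1 ∧ P.real C.1 = x}
    have hbd : BddAbove S := by
      refine ⟨t, ?_⟩
      rintro x ⟨C, _, rfl⟩
      exact C.2.2.2
    have hne : S.Nonempty := ⟨_, B, subset_rfl, rfl⟩
    have hup : ∀ C : T, B.1 ⊆ C.1 → P.real C.1 ≤ sSup S := fun C hC => le_csSup hbd ⟨C, hC, rfl⟩
    rcases (hup B subset_rfl).eq_or_lt with h | h
    · refine ⟨B, subset_rfl, fun C hC => ?_⟩
      have := hup C hC
      linarith
    · obtain ⟨_, ⟨B', hB', rfl⟩, hlt⟩ := exists_lt_of_lt_csSup hne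
        (show (sSup S + P.real B.1) / 2 < sSup S by linarith)
      refine ⟨B', hB', fun C hC => ?_⟩
      have := hup C hC
      linarith
  choose f hf1 hf2 using step
  let u : ℕ → T := fun k => f^[k] ⟨∅, MeasurableSet.empty, empty_subset _, by simpa using h0⟩
  have hu : ∀ k, u (k+1) = f (u k) := fun k => Function.iterate_succ_apply' f k _
  have hmono : Monotone (fun k => (u k).1) := monotone_nat_of_le_succ fun k => by
    rw [hu]; exact hf1 _
  let U : Set Ω := ⋃ k, (u k).1
  have hUm : MeasurableSet U := MeasurableSet.iUnion fun k => (u k).2.1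
  have hUA : U ⊆ A := iUnion_subset fun k => (u k).2.2.1
  have hlim : Tendsto (fun k => P.real (u k).1) atTop (nhds (P.real U)) :=
    (ENNReal.tendsto_toReal (measure_ne_top _ _)).comp (tendsto_measure_iUnion_atTop hmono)
  have hUt : P.real U ≤ t := le_of_tendsto' hlim fun k => (u k).2.2.2
  refine ⟨U, hUm, hUA, ?_⟩
  by_contra hne
  have hlt : P.real U < t := lt_of_le_of_ne hUt hne
  have hd : P.real (A \ U) = P.real A - P.real U := measureReal_sdiff hUA hUm
  obtain ⟨k, hk⟩ := exists_pow_lt_of_lt_one (show 0 < t - P.real U by linarith) (show (1/2:ℝ) < 1 by norm_num)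
  obtain ⟨D, hD, hDA, hD0, hDk⟩ := exists_small hP k (hA.diff hUm) (by linarith)
  have h1 : P.real (A \ U) ≤ 1 := measureReal_le_one
  have hk0 : (0:ℝ) < (1/2)^k := by positivity
  have hDt : P.real D ≤ t - P.real U := by nlinarith
  have hUD : P.real (U ∪ D) = P.real U + P.real D := by
    refine measureReal_union ?_ hD
    exact disjoint_left.2 fun x hx hx' => (hDA hx').2 hx
  let C : T := ⟨U ∪ D, hUm.union hD, union_subset hUA (hDA.trans sdiff_subset), by linarith⟩
  have key : ∀ k, P.real D ≤ 2 * (P.real (u (k+1)).1 - P.real (u k).1) := by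
    intro k
    have hkU : (u k).1 ⊆ U := subset_iUnion (fun k => (u k).1) k
    have a1 := hf2 (u k) C (hkU.trans subset_union_left)
    have a2 : P.real (u k).1 ≤ P.real U := measureReal_mono hkU
    have a3 : P.real C.1 = P.real U + P.real D := hUD
    rw [hu]
    linarith
  have hl2 := ((hlim.comp (tendsto_add_atTop_nat 1)).sub hlim).const_mul 2
  have := ge_of_tendsto' hl2 key
  linarith

end A
end DQ

open DQ in
/-- For every n ≥ 2 and α ∈ (0,1), the set of values attained by DQ^ES_α over all
random vectors of n integrable real random variables is exactly [0, 1]. -/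
theorem stmt2 {Ω : Type*} [MeasurableSpace Ω] (P : Measure Ω) [IsProbabilityMeasure P]
    (hP : Atomless P) (n : ℕ) (hn : 2 ≤ n) (α : ℝ) (hα : α ∈ Set.Ioo (0 : ℝ) 1) :
    {d : ℝ | ∃ X : Fin n → Ω → ℝ,
        (∀ i, Measurable (X i)) ∧ (∀ i, Integrable (X i) P) ∧ DQES P α X = d}
      = Set.Icc (0 : ℝ) 1 := by
  have ha0 := hα.1
  have ha1 := hα.2
  ext d
  constructor
  · rintro ⟨X, hX, hi, rfl⟩
    unfold DQES alphaStarES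
    have hbd : ∀ x ∈ ({β ∈ Set.Ioo (0 : ℝ) 1 |
        ES P β (fun ω => ∑ i, X i ω) ≤ ∑ i, ES P α (X i)} ∪ {1}), 0 ≤ x := by
      rintro x (hx | hx)
      · exact hx.1.1.le
      · rw [mem_singleton_iff.1 hx]; exact zero_le_one
    refine ⟨div_nonneg (Real.sInf_nonneg hbd) ha0.le, ?_⟩
    rw [div_le_one ha0]
    exact csInf_le ⟨0, hbd⟩ (Or.inl ⟨hα, ES_subadd hX hi hα⟩)
  · rintro ⟨hd0, hd1⟩
    obtain ⟨m, rfl⟩ : ∃ m, n = m + 2 := ⟨n - 2, by omega⟩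
    have hpos : 0 < α * (1 - α) := mul_pos ha0 (by linarith)
    obtain ⟨A, hA, -, hPA⟩ := exists_eq hP (A := univ) MeasurableSet.univ (t := α * (1 - α))
      hpos.le (by simp; nlinarith)
    obtain ⟨C, hC, hCA, hPC⟩ := exists_eq hP hA (t := d * (α * (1 - α)))
      (by positivity) (by rw [hPA]; nlinarith)
    have hB := hA.diff hC
    let g : Ω → ℝ := fun ω => - (A \ C).indicator (fun _ => (1:ℝ)) ω
    let X : Fin (m+2) → Ω → ℝ :=
      Fin.cons (A.indicator fun _ => (1:ℝ)) (Fin.cons g (fun _ _ => 0))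
    have hsum : (fun ω => ∑ i, X i ω) = C.indicator (fun _ => (1:ℝ)) := by
      funext ω
      simp only [X, Fin.sum_univ_succ, Fin.cons_zero, Fin.cons_succ, g]
      by_cases h1 : ω ∈ C
      · simp [h1, hCA h1]
      · by_cases h2 : ω ∈ A <;> simp [h1, h2]
    have hes : ∑ i, ES P α (X i) = 1 - α := by
      simp only [X, Fin.sum_univ_succ, Fin.cons_zero, Fin.cons_succ, g]
      rw [ES_ind hA hα, ES_zero hα, ES_neg hB hα, hPA, min_eq_right (by nlinarith)]
      · simp; field_simp
      · refine (measureReal_mono sdiff_subset).trans ?_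
        rw [hPA]; nlinarith
    refine ⟨X, ?_, ?_, ?_⟩
    · refine Fin.cases ?_ (Fin.cases ?_ fun i => ?_)
      · exact measurable_const.indicator hA
      · exact (measurable_const.indicator hB).neg
      · exact measurable_const
    · refine Fin.cases ?_ (Fin.cases ?_ fun i => ?_)
      · exact (integrable_const _).indicator hA
      · exact ((integrable_const _).indicator hB).neg
      · exact integrable_zero _ _ _
    · unfold DQES alphaStarES
      rw [hsum, hes, div_eq_iff ha0.ne']
      have hiff : ∀ β ∈ Ioo (0:ℝ) 1, (ES P β (C.indicator fun _ => (1:ℝ)) ≤ 1 - α ↔ d * α ≤ β) := by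
        intro β hβ
        rw [ES_ind hC hβ, hPC, div_le_iff₀ hβ.1]
        have h1a : 0 < 1 - α := by linarith
        constructor
        · intro h
          rcases min_le_iff.1 h with h | h
          · nlinarith [hβ.1]
          · nlinarith
        · intro h
          refine (min_le_right _ _).trans ?_
          nlinarith
      have hda : d * α < 1 := by nlinarith
      apply le_antisymm
      · refine le_of_forall_gt_imp_ge_of_dense fun y hy => ?_
        have hda0 : 0 ≤ d * α := by positivity
        have hmem : min y ((1 + d * α)/2) ∈ Ioo (0:ℝ) 1 :=
          ⟨lt_min (by linarith) (by linarith), (min_le_right _ _).trans_lt (by linarith)⟩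
        refine le_trans (csInf_le ?_ (Or.inl ?_)) (min_le_left y ((1 + d * α)/2))
        · refine ⟨0, ?_⟩
          rintro x (hx | hx)
          · exact hx.1.1.le
          · rw [mem_singleton_iff.1 hx]; exact zero_le_one
        · exact ⟨hmem, (hiff _ hmem).2 (le_min hy.le (by linarith))⟩
      · refine le_csInf ⟨1, Or.inr rfl⟩ ?_
        rintro x (hx | hx)
        · exact (hiff x hx.1).1 hx.2
        · rw [mem_singleton_iff.1 hx]; exact hda.le
end

section
/- For every random vector X = (X_1,…,X_n) and every α ∈ (0,1), DQ^VaR_α(X) = 0 if and only if X_1 + ⋯ + X_n ≤ Σ_{i=1}^n VaR_α(X_i) almost surely. -/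
open MeasureTheory ProbabilityTheory Filter Set

theorem DQ.VaR_le_iff_s3 {Ω : Type*} [MeasurableSpace Ω] (P : Measure Ω) [IsProbabilityMeasure P]
    (S : Ω → ℝ) (hS : Measurable S) (β : ℝ) (hβ : β ∈ Set.Ioo (0 : ℝ) 1) (t : ℝ) :
    DQ.VaR P β S ≤ t ↔ 1 - β ≤ (P {ω | S ω ≤ t}).toReal := by
  have : IsProbabilityMeasure (P.map S) := Measure.isProbabilityMeasure_map hS.aemeasurable
  have hF : ∀ x, (P {ω | S ω ≤ x}).toReal = cdf (P.map S) x := by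
    intro x
    rw [cdf_eq_real, measureReal_def, Measure.map_apply hS measurableSet_Iic]
    rfl
  unfold DQ.VaR
  simp only [hF]
  have hbot := tendsto_cdf_atBot (P.map S)
  have htop := tendsto_cdf_atTop (P.map S)
  have hmono := monotone_cdf (P.map S)
  have hne : {x : ℝ | 1 - β ≤ cdf (P.map S) x}.Nonempty := by
    obtain ⟨x, hx⟩ := (htop.eventually (lt_mem_nhds (show 1 - β < 1 by linarith [hβ.1]))).exists
    exact ⟨x, hx.le⟩
  have hbdd : BddBelow {x : ℝ | 1 - β ≤ cdf (P.map S) x} := by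
    obtain ⟨x, hx⟩ := (hbot.eventually (gt_mem_nhds (show 0 < 1 - β by linarith [hβ.2]))).exists
    refine ⟨x, fun y hy => ?_⟩
    by_contra h
    have h1 := hmono (not_le.1 h).le
    have h2 : 1 - β ≤ cdf (P.map S) y := hy
    linarith
  constructor
  · intro h
    have hc : Tendsto (cdf (P.map S)) (nhdsWithin t (Ioi t)) (nhds (cdf (P.map S) t)) :=
      ((cdf (P.map S)).right_continuous t).mono_left (nhdsWithin_mono _ Ioi_subset_Ici_self)
    refine ge_of_tendsto hc ?_
    filter_upwards [self_mem_nhdsWithin] with y hy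
    obtain ⟨x, hx, hxy⟩ := (csInf_lt_iff hbdd hne).1 (lt_of_le_of_lt h hy)
    exact le_trans hx (hmono hxy.le)
  · intro h
    exact csInf_le hbdd h

open DQ in
/-- DQ^VaR_α(X) = 0 if and only if X₁ + ⋯ + Xₙ ≤ ∑ᵢ VaR_α(Xᵢ) almost surely. -/
theorem stmt3 {Ω : Type*} [MeasurableSpace Ω] (P : Measure Ω) [IsProbabilityMeasure P]
    (hP : Atomless P) (n : ℕ) (X : Fin n → Ω → ℝ) (hX : ∀ i, Measurable (X i))
    (α : ℝ) (hα : α ∈ Set.Ioo (0 : ℝ) 1) :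
    DQVaR P α X = 0 ↔ ∀ᵐ ω ∂P, (∑ i, X i ω) ≤ ∑ i, VaR P α (X i) := by
  have hS : Measurable (fun ω => ∑ i, X i ω) := Finset.measurable_sum _ (fun i _ => hX i)
  set t := ∑ i, VaR P α (X i) with ht
  have hms : MeasurableSet {ω | ∑ i, X i ω ≤ t} := measurableSet_le hS measurable_const
  have hae : (∀ᵐ ω ∂P, (∑ i, X i ω) ≤ t) ↔ 1 ≤ (P {ω | ∑ i, X i ω ≤ t}).toReal := by
    have h1 : (∀ᵐ ω ∂P, (∑ i, X i ω) ≤ t) ↔ P {ω | ∑ i, X i ω ≤ t} = 1 :=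
      (prob_compl_eq_zero_iff hms)
    rw [h1]
    constructor
    · intro h; simp [h]
    · intro h
      refine le_antisymm prob_le_one ?_
      rw [← ENNReal.toReal_one] at h
      exact (ENNReal.toReal_le_toReal ENNReal.one_ne_top (measure_ne_top _ _)).1 h
  have hz : DQVaR P α X = 0 ↔ alphaStarVaR P α X = 0 := by
    unfold DQVaR
    rw [div_eq_zero_iff]
    exact or_iff_left hα.1.ne'
  rw [hz, hae]
  unfold alphaStarVaR
  rw [← ht]
  have hbdd : BddBelow ({β ∈ Set.Ioo (0 : ℝ) 1 | VaR P β (fun ω => ∑ i, X i ω) ≤ t} ∪ {1}) := by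
    refine ⟨0, ?_⟩
    rintro y (hy | hy)
    · exact hy.1.1.le
    · rw [mem_singleton_iff.1 hy]; exact zero_le_one
  have hne : ({β ∈ Set.Ioo (0 : ℝ) 1 | VaR P β (fun ω => ∑ i, X i ω) ≤ t} ∪ {1}).Nonempty :=
    ⟨1, Or.inr rfl⟩
  constructor
  · intro h
    refine le_of_forall_pos_le_add fun ε hε => ?_
    have hlt : sInf ({β ∈ Set.Ioo (0 : ℝ) 1 | VaR P β (fun ω => ∑ i, X i ω) ≤ t} ∪ {1})
        < min ε 1 := by
      rw [h]; exact lt_min hε one_pos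
    obtain ⟨β, hβ | hβ, hβε⟩ := (csInf_lt_iff hbdd hne).1 hlt
    · have := (DQ.VaR_le_iff_s3 P _ hS β hβ.1 t).1 hβ.2
      linarith [(lt_min_iff.1 hβε).1]
    · rw [mem_singleton_iff.1 hβ] at hβε
      exact absurd (lt_min_iff.1 hβε).2 (lt_irrefl _)
  · intro h
    apply le_antisymm
    · refine le_of_forall_pos_le_add fun ε hε => ?_
      have hm : min ε (1/2) ∈ Set.Ioo (0 : ℝ) 1 :=
        ⟨lt_min hε (by norm_num), lt_of_le_of_lt (min_le_right _ _) (by norm_num)⟩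
      rw [zero_add]
      refine le_trans (csInf_le hbdd (Or.inl ⟨hm, ?_⟩)) (min_le_left ε (1/2))
      rw [DQ.VaR_le_iff_s3 P _ hS _ hm t]
      linarith [hm.1]
    · refine le_csInf hne ?_
      rintro y (hy | hy)
      · exact hy.1.1.le
      · rw [mem_singleton_iff.1 hy]; exact zero_le_one
end
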